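/- (Linear convergence under a Bregman error bound.) Under the standing assumption with strict inequality αϱγ > 1, assume additionally: ψ is ς-strongly convex (ς > 0); ∇ψ and ∇φ are Lipschitz continuous with moduli L_ψ and L_φ; the solution set U* of saddle points is nonempty; and there is η > 0 such that for every iterate u^{k+1} = (x^{k+1}, y^{k+1}) of SPIDA, dist_B(u^{k+1}, U*)² ≤ η² · inf over (ξ, ζ) ∈ ∂f(x^{k+1}) × ∂g(y^{k+1}) of (‖x^{k+1} − Π_X[x^{k+1} − (ξ + Aᵀy^{k+1})]‖² + ‖y^{k+1} − Π_Y[y^{k+1} − (ζ − Ax^{k+1})]‖²), where dist_B(u, U*)² = min{ γ B_φ(y*, y) + μ B_ψ(x*, x) : (x*, y*) ∈ U* }. Define ϑ = min{ ϱ/(4γη²L_φ²), (γαϱ − 1)/(4αη²(‖AAᵀ‖ + γ²L_φ²)), ς/(4μη²L_ψ²) } > 0. Then for every k: (1 + ϑ) · dist_B(u^{k+1}, U*)² ≤ dist_B(u^k, U*)². -/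

import Mathlib

noncomputable section
open scoped RealInnerProductSpace
open Filter

abbrev Euc (d : ℕ) : Type := EuclideanSpace ℝ (Fin d)

/-- Bregman distance associated with kernel `φ` whose gradient map is `φ'`. -/
def Breg {d : ℕ} (φ : Euc d → ℝ) (φ' : Euc d → Euc d) (x y : Euc d) : ℝ :=
  φ x - φ y - ⟪φ' y, x - y⟫

/-- Convex subdifferential. -/
def subdiff {d : ℕ} (h : Euc d → ℝ) (x : Euc d) : Set (Euc d) :=
  {ξ | ∀ z, h x + ⟪z - x, ξ⟫ ≤ h z}

open Classical in
/-- Euclidean (metric) projection onto a set (the nearest point, when it exists). -/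
def projOn {d : ℕ} (X : Set (Euc d)) (z : Euc d) : Euc d :=
  if h : ∃ p ∈ X, ∀ w ∈ X, ‖z - p‖ ≤ ‖z - w‖ then h.choose else z

/-- The convex-concave Lagrangian `L(x,y) = f(x) + ⟨Ax, y⟩ − g(y)`. -/
def Lag {n m : ℕ} (f : Euc n → ℝ) (g : Euc m → ℝ) (A : Euc n →L[ℝ] Euc m)
    (x : Euc n) (y : Euc m) : ℝ := f x + ⟪A x, y⟫ - g y

/-!
Every saddle point is at most as far, in Bregman distance, from the new iterate as from the old
one; adding the three-point inequalities of the predictor, primal and dual steps to the saddle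
inequality shows that the distance even drops by a *decrement*
`γ (B_φ(y⁺, ỹ) + B_φ(ỹ, y)) + μ B_ψ(x⁺, x) − ⟨A(x⁺ − x), y⁺ − ỹ⟩` independent of the saddle point.
The optimality conditions of the same steps bound the natural residuals at `(x⁺, y⁺)` by
`r = μ(∇ψ(x⁺) − ∇ψ(x)) − Aᵀ(y⁺ − ỹ)` and `γ(∇φ(y⁺) − ∇φ(y))`. Up to the term `‖y⁺ − ỹ‖² / (2α)`,
which strong convexity of `φ` pays for, the second half of the decrement is the value at `x⁺` of a
nonnegative function that has a Lipschitz gradient, equal to `r` at `x⁺`; hence it dominates a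
multiple of `‖r‖²`. So the decrement dominates the residuals, and by the error bound a multiple `ϑ`
of the new distance.
-/

open Set Topology InnerProductSpace
open ContinuousLinearMap (adjoint)

section NormedSpace

variable {E : Type*} [NormedAddCommGroup E] [NormedSpace ℝ E] {h : E → ℝ}

theorem continuous_of_convexOn_of_lowerSemicontinuous [CompleteSpace E]
    (hconv : ConvexOn ℝ univ h) (hlsc : LowerSemicontinuous h) : Continuous h := by
  obtain ⟨N, x, hx⟩ : ∃ N : ℕ, (interior {z | h z ≤ N}).Nonempty :=
    nonempty_interior_of_iUnion_of_closed (fun N : ℕ => hlsc.isClosed_preimage N)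
      (eq_univ_of_forall fun z => mem_iUnion.2 (exists_nat_ge (h z)))
  have hbdd : (𝓝 x).IsBoundedUnder (· ≤ ·) h :=
    isBoundedUnder_of_eventually_le (mem_interior_iff_mem_nhds.1 hx)
  have htfae : (∃ x₀ ∈ univ, (𝓝 x₀).IsBoundedUnder (· ≤ ·) h) ↔ ContinuousOn h univ :=
    (hconv.continuousOn_tfae isOpen_univ univ_nonempty).out 3 1
  exact continuousOn_univ.1 (htfae.1 ⟨x, mem_univ x, hbdd⟩)

-- The strict epigraph of `h` is separated from `C ×ˢ {h x}` by a non-vertical hyperplane.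
theorem exists_affine_minorant_of_isMinOn {C : Set E} {x : E} (hconv : ConvexOn ℝ univ h)
    (hcont : Continuous h) (hC : Convex ℝ C) (hx : x ∈ C) (hmin : IsMinOn h C x) :
    ∃ l : E →L[ℝ] ℝ, (∀ z, h x + l (z - x) ≤ h z) ∧ ∀ z ∈ C, 0 ≤ l (z - x) := by
  have hepi_convex : Convex ℝ {p : E × ℝ | h p.1 < p.2} := by
    simpa using hconv.convex_strict_epigraph
  have hdisj : Disjoint {p : E × ℝ | h p.1 < p.2} (C ×ˢ {h x}) :=
    disjoint_left.2 fun p hp hpC =>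
      (isMinOn_iff.1 hmin p.1 hpC.1).not_gt (hp.trans_eq hpC.2)
  obtain ⟨F, u, hepi, hbase⟩ := geometric_hahn_banach_open hepi_convex
    (isOpen_lt (hcont.comp continuous_fst) continuous_snd) (hC.prod (convex_singleton (h x))) hdisj
  have hF (z : E) (t : ℝ) : F (z, t) = F (x, h x) + F (z - x, 0) + (t - h x) * F (0, 1) := by
    rw [← smul_eq_mul, ← map_smul, ← map_add, ← map_add]
    simp
  have hle_base (z : E) (hz : z ∈ C) : u ≤ F (z, h x) := hbase _ ⟨hz, rfl⟩
  have hslope : F (0, 1) < 0 := by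
    have hlt := (hepi (x, h x + 1) (lt_add_one (h x))).trans_le (hle_base x hx)
    rw [hF x (h x + 1), sub_self, Prod.mk_zero_zero, map_zero] at hlt
    linarith
  have hgraph_le (z : E) : F (z, h z) ≤ u := by
    have hlim : Tendsto (fun t => F (z, t)) (𝓝[>] h z) (𝓝 (F (z, h z))) :=
      ((F.continuous.comp (Continuous.prodMk_right z)).tendsto (h z)).mono_left nhdsWithin_le_nhds
    exact le_of_tendsto hlim (eventually_mem_nhdsWithin.mono fun t ht => (hepi (z, t) ht).le)
  refine ⟨(-F (0, 1))⁻¹ • F.comp (.inl ℝ E ℝ), fun z => ?_, fun z hz => ?_⟩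
  · have hle : F (z, h z) ≤ F (x, h x) := (hgraph_le z).trans (hle_base x hx)
    rw [hF z (h z)] at hle
    suffices (-F (0, 1))⁻¹ * F (z - x, 0) ≤ h z - h x by
      simp only [smul_apply, ContinuousLinearMap.comp_apply, ContinuousLinearMap.inl_apply,
        smul_eq_mul]
      linarith
    rw [inv_mul_le_iff₀ (neg_pos.2 hslope)]
    linarith
  · have hle : F (x, h x) ≤ F (z, h x) := (hgraph_le x).trans (hle_base z hz)
    rw [hF z (h x), sub_self, zero_mul] at hle
    exact mul_nonneg (inv_nonneg.2 (neg_nonneg.2 hslope.le)) (by simpa using hle)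

end NormedSpace

section InnerProductSpace

variable {E : Type*} [NormedAddCommGroup E] [InnerProductSpace ℝ E]

theorem strongConvexOn_of_convexOn_mul_sub {s : Set E} {φ ψ : E → ℝ} {m c : ℝ}
    (hc : 0 < c) (hφ : StrongConvexOn s m φ) (hψφ : ConvexOn ℝ s fun z => c * ψ z - φ z) :
    StrongConvexOn s (m / c) ψ := by
  rw [strongConvexOn_iff_convex] at hφ ⊢
  refine ((hψφ.add hφ).smul (inv_nonneg.2 hc.le)).congr fun z _ => ?_
  simp only [Pi.add_apply, smul_eq_mul]
  field_simp
  ring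

theorem norm_gradient_sq_le_of_nonneg_of_le {Φ : E → ℝ} {g x : E} {K T : ℝ}
    (hnonneg : ∀ z, 0 ≤ Φ z) (hsmooth : ∀ z, Φ z ≤ Φ x + ⟪g, z - x⟫ + K * ‖z - x‖ ^ 2)
    (hT : 0 ≤ T) (hKT : 4 * K * T ≤ 1) : T * ‖g‖ ^ 2 ≤ Φ x := by
  -- Compare with the gradient step of length `2 * T`.
  have hstep := (hnonneg (x - (2 * T) • g)).trans (hsmooth (x - (2 * T) • g))
  rw [sub_sub_cancel_left, inner_neg_right, real_inner_smul_right, real_inner_self_eq_norm_sq,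
    norm_neg, norm_smul, mul_pow, Real.norm_eq_abs, sq_abs] at hstep
  have := mul_le_mul_of_nonneg_right hKT (by positivity : 0 ≤ T * ‖g‖ ^ 2)
  linarith

theorem inner_le_mul_norm_sq_add_mul_norm_sq {α : ℝ} (hα : 0 < α) (v w : E) :
    ⟪v, w⟫ ≤ α / 2 * ‖v‖ ^ 2 + 1 / (2 * α) * ‖w‖ ^ 2 := by
  have hsq : 0 ≤ 1 / (2 * α) * ‖α • v - w‖ ^ 2 := by positivity
  rw [norm_sub_sq_real, norm_smul, real_inner_smul_left, mul_pow, Real.norm_eq_abs, sq_abs] at hsq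
  field_simp at hsq ⊢
  linarith

end InnerProductSpace

section Subdifferential

variable {E : Type*} [NormedAddCommGroup E] [InnerProductSpace ℝ E]

/-- The convex subdifferential of `h` at `x`. -/
def subdifferential (h : E → ℝ) (x : E) : Set E :=
  {ξ | ∀ z, h x + ⟪z - x, ξ⟫ ≤ h z}

variable [CompleteSpace E] {C : Set E} {h k : E → ℝ} {k' x z : E}

theorem sub_add_inner_nonneg_of_isMinOn_add
    (hh : ConvexOn ℝ C h) (hk : HasGradientAt k k' x)
    (hmin : IsMinOn (fun w => h w + k w) C x) (hx : x ∈ C) (hz : z ∈ C) :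
    0 ≤ h z - h x + ⟪k', z - x⟫ := by
  have hslope : Tendsto (fun t : ℝ => t⁻¹ • (k (x + t • (z - x)) - k x)) (𝓝[>] 0)
      (𝓝 ⟪k', z - x⟫) := by
    simpa using (hk.hasFDerivAt.hasLineDerivAt (z - x)).tendsto_slope_zero_right
  suffices h x - h z ≤ ⟪k', z - x⟫ by linarith
  refine ge_of_tendsto hslope ?_
  filter_upwards [Ioc_mem_nhdsGT one_pos] with t ⟨ht0, ht1⟩
  have hsegment : x + t • (z - x) = (1 - t) • x + t • z := by module
  have hconvex : h (x + t • (z - x)) ≤ (1 - t) * h x + t * h z := by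
    rw [hsegment]
    exact hh.2 hx hz (sub_nonneg.2 ht1) ht0.le (sub_add_cancel 1 t)
  have hle := isMinOn_iff.1 hmin _ (hh.1.add_smul_sub_mem hx hz ⟨ht0.le, ht1⟩)
  rw [smul_eq_mul, le_inv_mul_iff₀ ht0]
  linarith

theorem exists_mem_subdifferential_of_isMinOn_add (hconv : ConvexOn ℝ univ h)
    (hcont : Continuous h) (hC : Convex ℝ C) (hk : HasGradientAt k k' x) (hx : x ∈ C)
    (hmin : IsMinOn (fun w => h w + k w) C x) :
    ∃ ξ ∈ subdifferential h x, ∀ z ∈ C, 0 ≤ ⟪ξ + k', z - x⟫ := by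
  have hlin_min : IsMinOn (fun z => h z + ⟪k', z⟫) C x := isMinOn_iff.2 fun z hz => by
    have := sub_add_inner_nonneg_of_isMinOn_add (hconv.subset (subset_univ C) hC) hk hmin hx hz
    rw [inner_sub_right] at this
    linarith
  obtain ⟨l, hl_le, hl_nonneg⟩ := exists_affine_minorant_of_isMinOn
    (hconv.add ((innerSL ℝ k').toLinearMap.convexOn convex_univ))
    (hcont.add (innerSL ℝ k').continuous) hC hx hlin_min
  refine ⟨(toDual ℝ E).symm l - k', fun z => ?_, fun z hz => ?_⟩
  · have := hl_le z
    simp only [Pi.add_apply, ContinuousLinearMap.coe_coe, innerSL_apply_apply] at this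
    rw [real_inner_comm, inner_sub_left, toDual_symm_apply, inner_sub_right k']
    linarith
  · simpa using hl_nonneg z hz

end Subdifferential

section MetricProjection

variable {E : Type*} [NormedAddCommGroup E] [InnerProductSpace ℝ E] {C : Set E} {P : E → E}

/-- `P` maps every point to a nearest point of `C`. -/
def IsMetricProjection (C : Set E) (P : E → E) : Prop :=
  ∀ z, P z ∈ C ∧ IsMinOn (fun w => ‖z - w‖) C (P z)

/-- The size of the natural residual at `x` of the variational inequality over `C` with
operator value `w`, where `P` is the metric projection onto `C`. -/
def naturalResidual (P : E → E) (x w : E) : ℝ :=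
  ‖x - P (x - w)‖

theorem naturalResidual_le_norm_sub {x w w' : E} (hP : IsMetricProjection C P)
    (hC : Convex ℝ C) (hx : x ∈ C) (hw' : ∀ z ∈ C, 0 ≤ ⟪w', z - x⟫) :
    naturalResidual P x w ≤ ‖w - w'‖ := by
  obtain ⟨hp, hpmin⟩ := hP (x - w)
  unfold naturalResidual
  set p := P (x - w)
  have hproj : ⟪x - w - p, x - p⟫ ≤ 0 :=
    (norm_eq_iInf_iff_real_inner_le_zero hC hp).1 (hpmin.iInf_eq hp).symm x hx
  have hvi : 0 ≤ ⟪w', p - x⟫ := hw' p hp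
  have hsq : ‖x - p‖ * ‖x - p‖ ≤ ‖w - w'‖ * ‖x - p‖ := by
    calc ‖x - p‖ * ‖x - p‖ = ⟪x - w - p, x - p⟫ - ⟪w', p - x⟫ + ⟪w - w', x - p⟫ := by
          rw [← neg_sub x p, inner_neg_right, sub_neg_eq_add, ← inner_add_left, ← inner_add_left,
            ← real_inner_self_eq_norm_mul_norm]
          congr 1
          abel
      _ ≤ ⟪w - w', x - p⟫ := by linarith
      _ ≤ ‖w - w'‖ * ‖x - p‖ := real_inner_le_norm _ _
  rcases (norm_nonneg (x - p)).eq_or_lt with hzero | hpos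
  · exact hzero ▸ norm_nonneg _
  · exact le_of_mul_le_mul_right hsq hpos

theorem isMetricProjection_projOn {d : ℕ} {C : Set (Euc d)} (hne : C.Nonempty)
    (hcl : IsClosed C) (hC : Convex ℝ C) : IsMetricProjection C (projOn C) := by
  intro z
  have hex : ∃ p ∈ C, ∀ w ∈ C, ‖z - p‖ ≤ ‖z - w‖ := by
    obtain ⟨p, hp, hdist⟩ := exists_norm_eq_iInf_of_complete_convex hne hcl.isComplete hC z
    exact ⟨p, hp, fun w hw => hdist.trans_le
      (ciInf_le ⟨0, forall_mem_range.2 fun _ => norm_nonneg _⟩ (⟨w, hw⟩ : C))⟩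
  rw [projOn, dif_pos hex]
  exact hex.choose_spec

end MetricProjection

section BregmanDistance

variable {E : Type*} [NormedAddCommGroup E] [InnerProductSpace ℝ E] {φ : E → ℝ} {φ' : E → E}

/-- The Bregman distance of the kernel `φ` with gradient map `φ'`; on `Euc d` it unfolds to
`Breg`. -/
def bregmanDist (φ : E → ℝ) (φ' : E → E) (x y : E) : ℝ :=
  φ x - φ y - ⟪φ' y, x - y⟫

theorem inner_sub_eq_bregmanDist (x y z : E) :
    ⟪φ' y - φ' z, x - y⟫ = bregmanDist φ φ' x z - bregmanDist φ φ' x y - bregmanDist φ φ' y z := by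
  simp only [bregmanDist, inner_sub_left, inner_sub_right]
  ring

theorem bregmanDist_add_bregmanDist_comm (x y : E) :
    bregmanDist φ φ' x y + bregmanDist φ φ' y x = ⟪φ' x - φ' y, x - y⟫ := by
  simp only [bregmanDist, inner_sub_left, inner_sub_right]
  ring

theorem inner_sub_le_mul_norm_sub_sq {K : NNReal} (hlip : LipschitzWith K φ') (x y : E) :
    ⟪φ' x - φ' y, x - y⟫ ≤ K * ‖x - y‖ ^ 2 :=
  calc ⟪φ' x - φ' y, x - y⟫ ≤ ‖φ' x - φ' y‖ * ‖x - y‖ := real_inner_le_norm _ _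
    _ ≤ K * ‖x - y‖ * ‖x - y‖ := by gcongr; exact hlip.norm_sub_le x y
    _ = K * ‖x - y‖ ^ 2 := by ring

variable [CompleteSpace E]

theorem hasGradientAt_inner_add_mul_bregmanDist {x : E} (hφ : HasGradientAt φ (φ' x) x)
    (b x₀ : E) (c : ℝ) :
    HasGradientAt (fun z => ⟪b, z⟫ + c * bregmanDist φ φ' z x₀) (b + c • (φ' x - φ' x₀)) x := by
  have hlin (w : E) : HasFDerivAt (fun z => ⟪w, z⟫) (toDual ℝ E w) x := (toDual ℝ E w).hasFDerivAt
  have hsub : HasFDerivAt (fun z => ⟪φ' x₀, z - x₀⟫) (toDual ℝ E (φ' x₀)) x := by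
    simpa only [inner_sub_right] using (hlin (φ' x₀)).sub_const ⟪φ' x₀, x₀⟫
  have hsum := (hlin b).add (((hφ.hasFDerivAt.sub_const (φ x₀)).sub hsub).const_mul c)
  exact hasGradientAt_iff_hasFDerivAt.2 (hsum.congr_fderiv (by simp))

theorem mul_norm_sub_sq_le_bregmanDist {m : ℝ} (hsc : StrongConvexOn univ m φ) {x : E}
    (hφ : HasGradientAt φ (φ' x) x) (z : E) :
    m / 2 * ‖z - x‖ ^ 2 ≤ bregmanDist φ φ' z x := by
  have hsq : HasFDerivAt (fun w : E => m / 2 * ‖w‖ ^ 2) (toDual ℝ E (m • x)) x := by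
    refine ((hasStrictFDerivAt_norm_sq x).hasFDerivAt.const_mul (m / 2)).congr_fderiv ?_
    ext w
    simp only [smul_apply, coe_innerSL_apply, nsmul_eq_mul, Nat.cast_ofNat, smul_eq_mul, map_smul,
      toDual_apply_apply]
    ring
  have hk : HasGradientAt (fun w : E => m / 2 * ‖w‖ ^ 2 - φ w) (m • x - φ' x) x :=
    hasGradientAt_iff_hasFDerivAt.2 ((hsq.sub hφ.hasFDerivAt).congr_fderiv (by simp))
  have hfirst := sub_add_inner_nonneg_of_isMinOn_add (strongConvexOn_iff_convex.1 hsc) hk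
    (isMinOn_iff.2 fun w _ => by simp) (mem_univ x) (mem_univ z)
  rw [norm_sub_sq_real, bregmanDist]
  rw [inner_sub_left, real_inner_smul_left, inner_sub_right x, real_inner_self_eq_norm_sq] at hfirst
  rw [real_inner_comm x z]
  linarith

theorem bregmanDist_nonneg (hconv : ConvexOn ℝ univ φ) {x : E} (hφ : HasGradientAt φ (φ' x) x)
    (z : E) : 0 ≤ bregmanDist φ φ' z x := by
  simpa using mul_norm_sub_sq_le_bregmanDist (strongConvexOn_zero.2 hconv) hφ z

theorem bregmanDist_le_mul_norm_sub_sq (hconv : ConvexOn ℝ univ φ)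
    (hφ : ∀ z, HasGradientAt φ (φ' z) z) {K : NNReal} (hlip : LipschitzWith K φ') (x y : E) :
    bregmanDist φ φ' x y ≤ K * ‖x - y‖ ^ 2 :=
  calc bregmanDist φ φ' x y ≤ bregmanDist φ φ' x y + bregmanDist φ φ' y x :=
        le_add_of_nonneg_right (bregmanDist_nonneg hconv (hφ x) y)
    _ = ⟪φ' x - φ' y, x - y⟫ := bregmanDist_add_bregmanDist_comm x y
    _ ≤ K * ‖x - y‖ ^ 2 := inner_sub_le_mul_norm_sub_sq hlip x y

theorem le_of_strongConvexOn_of_lipschitzWith [Nontrivial E] {m : ℝ} {K : NNReal}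
    (hsc : StrongConvexOn univ m φ) (hφ : ∀ z, HasGradientAt φ (φ' z) z)
    (hlip : LipschitzWith K φ') : m ≤ K := by
  obtain ⟨x, y, hxy⟩ := exists_pair_ne E
  refine le_of_mul_le_mul_right ?_ (pow_pos (norm_pos_iff.2 (sub_ne_zero.2 hxy)) 2)
  calc m * ‖x - y‖ ^ 2 = m / 2 * ‖x - y‖ ^ 2 + m / 2 * ‖y - x‖ ^ 2 := by
        rw [norm_sub_rev y x]
        ring
    _ ≤ bregmanDist φ φ' x y + bregmanDist φ φ' y x :=
        add_le_add (mul_norm_sub_sq_le_bregmanDist hsc (hφ y) x)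
          (mul_norm_sub_sq_le_bregmanDist hsc (hφ x) y)
    _ = ⟪φ' x - φ' y, x - y⟫ := bregmanDist_add_bregmanDist_comm x y
    _ ≤ K * ‖x - y‖ ^ 2 := inner_sub_le_mul_norm_sub_sq hlip x y

end BregmanDistance

section BregmanProx

variable {E : Type*} [NormedAddCommGroup E] [InnerProductSpace ℝ E]
  {C : Set E} {h φ : E → ℝ} {φ' : E → E} {b x₀ x : E} {c : ℝ}

/-- `x` is a Bregman proximal step from `x₀` for `h + ⟪b, ·⟫` over `C`, with step parameter `c`. -/
def IsBregmanProx (C : Set E) (h : E → ℝ) (b : E) (c : ℝ) (φ : E → ℝ) (φ' : E → E)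
    (x₀ x : E) : Prop :=
  x ∈ C ∧ IsMinOn (fun z => h z + (⟪b, z⟫ + c * bregmanDist φ φ' z x₀)) C x

theorem IsBregmanProx.of_isMaxOn (hx : x ∈ C)
    (hmax : IsMaxOn (fun z => -h z + ⟪b, z⟫ - c * bregmanDist φ φ' z x₀) C x) :
    IsBregmanProx C h (-b) c φ φ' x₀ x := by
  refine ⟨hx, isMinOn_iff.2 fun z hz => ?_⟩
  have := isMaxOn_iff.1 hmax z hz
  simp only [inner_neg_left]
  linarith

variable [CompleteSpace E]

theorem IsBregmanProx.of_isMinOn_inner_map {F : Type*} [NormedAddCommGroup F]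
    [InnerProductSpace ℝ F] [CompleteSpace F] {A : E →L[ℝ] F} {w : F} (hx : x ∈ C)
    (hmin : IsMinOn (fun z => h z + ⟪A z, w⟫ + c * bregmanDist φ φ' z x₀) C x) :
    IsBregmanProx C h (adjoint A w) c φ φ' x₀ x := by
  refine ⟨hx, ?_⟩
  simpa only [ContinuousLinearMap.adjoint_inner_left, real_inner_comm (A _), ← add_assoc] using hmin

theorem IsBregmanProx.add_bregmanDist_le (hprox : IsBregmanProx C h b c φ φ' x₀ x)
    (hh : ConvexOn ℝ C h) (hφ : HasGradientAt φ (φ' x) x) {z : E} (hz : z ∈ C) :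
    h x + ⟪b, x⟫ + c * (bregmanDist φ φ' x x₀ + bregmanDist φ φ' z x) ≤
      h z + ⟪b, z⟫ + c * bregmanDist φ φ' z x₀ := by
  have hfirst := sub_add_inner_nonneg_of_isMinOn_add hh
    (hasGradientAt_inner_add_mul_bregmanDist hφ b x₀ c) hprox.2 hprox.1 hz
  rw [inner_add_left, real_inner_smul_left, inner_sub_eq_bregmanDist (φ := φ),
    inner_sub_right] at hfirst
  linarith

theorem IsBregmanProx.exists_mem_subdifferential (hprox : IsBregmanProx C h b c φ φ' x₀ x)
    (hh : ConvexOn ℝ univ h) (hcont : Continuous h) (hC : Convex ℝ C)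
    (hφ : HasGradientAt φ (φ' x) x) :
    ∃ ξ ∈ subdifferential h x, ∀ z ∈ C, 0 ≤ ⟪ξ + (b + c • (φ' x - φ' x₀)), z - x⟫ :=
  exists_mem_subdifferential_of_isMinOn_add hh hcont hC
    (hasGradientAt_inner_add_mul_bregmanDist hφ b x₀ c) hprox.1 hprox.2

end BregmanProx

section SPIDA

variable {E F : Type*} [NormedAddCommGroup E] [InnerProductSpace ℝ E]
  [NormedAddCommGroup F] [InnerProductSpace ℝ F]
  {X : Set E} {Y : Set F} {f ψ : E → ℝ} {g φ : F → ℝ} {A : E →L[ℝ] F}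
  {ψ' : E → E} {φ' : F → F} {γ μ α ϱ T : ℝ} {Lψ Lφ : NNReal} {u v : E × F} {yt : F}

/-- The convex-concave Lagrangian `L(x,y) = f(x) + ⟨Ax, y⟩ − g(y)`; on Euclidean spaces it
unfolds to `Lag`. -/
def lagrangian (f : E → ℝ) (g : F → ℝ) (A : E →L[ℝ] F) (x : E) (y : F) : ℝ :=
  f x + ⟪A x, y⟫ - g y

/-- The Bregman distance from `p` to `u` on the product space, weighting the dual kernel `φ`
by `γ` and the primal kernel `ψ` by `μ`. -/
def bregmanSum (γ μ : ℝ) (φ : F → ℝ) (φ' : F → F) (ψ : E → ℝ) (ψ' : E → E) (p u : E × F) : ℝ :=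
  γ * bregmanDist φ φ' p.2 u.2 + μ * bregmanDist ψ ψ' p.1 u.1

/-- The squared Bregman distance `dist_B(u, U)²`. It is an infimum: attainment is not part of
the definition. -/
def bregmanSqDist (γ μ : ℝ) (φ : F → ℝ) (φ' : F → F) (ψ : E → ℝ) (ψ' : E → E)
    (U : Set (E × F)) (u : E × F) : ℝ :=
  ⨅ p : U, bregmanSum γ μ φ φ' ψ ψ' p u

/-- The amount by which a SPIDA step from `u` to `v` with predictor `yt` decreases the Bregman
distance to every saddle point. -/
def spidaDecrement (γ μ : ℝ) (φ : F → ℝ) (φ' : F → F) (ψ : E → ℝ) (ψ' : E → E) (A : E →L[ℝ] F)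
    (u : E × F) (yt : F) (v : E × F) : ℝ :=
  γ * (bregmanDist φ φ' v.2 yt + bregmanDist φ φ' yt u.2) +
    (μ * bregmanDist ψ ψ' v.1 u.1 - ⟪A (v.1 - u.1), v.2 - yt⟫)

theorem bregmanSqDist_le_bregmanSum {U : Set (E × F)}
    (hnonneg : ∀ p, 0 ≤ bregmanSum γ μ φ φ' ψ ψ' p u) {p : E × F} (hp : p ∈ U) :
    bregmanSqDist γ μ φ φ' ψ ψ' U u ≤ bregmanSum γ μ φ φ' ψ ψ' p u :=
  ciInf_le ⟨0, forall_mem_range.2 fun q : U => hnonneg q⟩ (⟨p, hp⟩ : U)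

theorem mul_sq_norm_dual_residual_le (hα : 0 < α) (hT : 0 ≤ T) (hlip : LipschitzWith Lφ φ')
    (hrate : 4 * α * γ ^ 2 * Lφ ^ 2 * T ≤ γ * α * ϱ - 1) (y yt yp : F) :
    T * ‖γ • (φ' yp - φ' y)‖ ^ 2 ≤
      (γ * ϱ / 2 - 1 / (2 * α)) * (‖yp - yt‖ ^ 2 + ‖yt - y‖ ^ 2) := by
  have hgradient : ‖γ • (φ' yp - φ' y)‖ ^ 2 ≤ γ ^ 2 * Lφ ^ 2 * ‖yp - y‖ ^ 2 :=
    calc ‖γ • (φ' yp - φ' y)‖ ^ 2 = γ ^ 2 * ‖φ' yp - φ' y‖ ^ 2 := by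
          rw [norm_smul, mul_pow, Real.norm_eq_abs, sq_abs]
      _ ≤ γ ^ 2 * (Lφ * ‖yp - y‖) ^ 2 := by
          gcongr
          exact hlip.norm_sub_le yp y
      _ = γ ^ 2 * Lφ ^ 2 * ‖yp - y‖ ^ 2 := by ring
  have hsplit : ‖yp - y‖ ^ 2 ≤ 2 * (‖yp - yt‖ ^ 2 + ‖yt - y‖ ^ 2) :=
    calc ‖yp - y‖ ^ 2 ≤ (‖yp - yt‖ + ‖yt - y‖) ^ 2 := by
          gcongr
          exact norm_sub_le_norm_sub_add_norm_sub yp yt y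
      _ ≤ 2 * (‖yp - yt‖ ^ 2 + ‖yt - y‖ ^ 2) := add_sq_le
  have hcoeff : T * (γ ^ 2 * Lφ ^ 2 * 2) ≤ γ * ϱ / 2 - 1 / (2 * α) := by
    field_simp
    linarith
  calc T * ‖γ • (φ' yp - φ' y)‖ ^ 2
      ≤ T * (γ ^ 2 * Lφ ^ 2 * (2 * (‖yp - yt‖ ^ 2 + ‖yt - y‖ ^ 2))) := by
        gcongr
        exact hgradient.trans (by gcongr)
    _ = T * (γ ^ 2 * Lφ ^ 2 * 2) * (‖yp - yt‖ ^ 2 + ‖yt - y‖ ^ 2) := by ring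
    _ ≤ (γ * ϱ / 2 - 1 / (2 * α)) * (‖yp - yt‖ ^ 2 + ‖yt - y‖ ^ 2) := by gcongr

variable [CompleteSpace E]

theorem bregmanSum_nonneg [CompleteSpace F] (hγ : 0 ≤ γ) (hμ : 0 ≤ μ) (hφcv : ConvexOn ℝ univ φ)
    (hφ : HasGradientAt φ (φ' u.2) u.2) (hψcv : ConvexOn ℝ univ ψ)
    (hψ : HasGradientAt ψ (ψ' u.1) u.1) (p : E × F) : 0 ≤ bregmanSum γ μ φ φ' ψ ψ' p u :=
  add_nonneg (mul_nonneg hγ (bregmanDist_nonneg hφcv hφ p.2))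
    (mul_nonneg hμ (bregmanDist_nonneg hψcv hψ p.1))

theorem inner_map_sub_le_bregmanDist_add (hα : 0 < α) (hμ : 0 < μ)
    (hsc : StrongConvexOn univ (α * ‖A‖ ^ 2 / μ) ψ) {x : E} (hψ : HasGradientAt ψ (ψ' x) x)
    (z : E) (d : F) :
    ⟪A (z - x), d⟫ ≤ μ * bregmanDist ψ ψ' z x + 1 / (2 * α) * ‖d‖ ^ 2 :=
  calc ⟪A (z - x), d⟫ ≤ α / 2 * ‖A (z - x)‖ ^ 2 + 1 / (2 * α) * ‖d‖ ^ 2 :=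
        inner_le_mul_norm_sq_add_mul_norm_sq hα _ _
    _ ≤ α / 2 * (‖A‖ * ‖z - x‖) ^ 2 + 1 / (2 * α) * ‖d‖ ^ 2 := by
        gcongr
        exact A.le_opNorm _
    _ = μ * (α * ‖A‖ ^ 2 / μ / 2 * ‖z - x‖ ^ 2) + 1 / (2 * α) * ‖d‖ ^ 2 := by
        field_simp
    _ ≤ μ * bregmanDist ψ ψ' z x + 1 / (2 * α) * ‖d‖ ^ 2 := by
        gcongr
        exact mul_norm_sub_sq_le_bregmanDist hsc hψ z

variable [CompleteSpace F]

theorem mul_sq_norm_primal_residual_le (hα : 0 < α) (hμ : 0 < μ)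
    (hψ : ∀ z, HasGradientAt ψ (ψ' z) z) (hsc : StrongConvexOn univ (α * ‖A‖ ^ 2 / μ) ψ)
    (hlip : LipschitzWith Lψ ψ') (hT : 0 ≤ T) (hrate : 4 * μ * Lψ * T ≤ 1) (x xp : E) (d : F) :
    T * ‖μ • (ψ' xp - ψ' x) - adjoint A d‖ ^ 2 ≤
      μ * bregmanDist ψ ψ' xp x - ⟪A (xp - x), d⟫ + 1 / (2 * α) * ‖d‖ ^ 2 := by
  have hconv : ConvexOn ℝ univ ψ := strongConvexOn_zero.1 (hsc.mono (by positivity))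
  -- By the Young inequality, the right-hand side, as a function `Φ` of `xp`, is nonnegative on all
  -- of `E`, and the vector on the left is its gradient.
  refine norm_gradient_sq_le_of_nonneg_of_le (K := μ * Lψ)
    (Φ := fun z => μ * bregmanDist ψ ψ' z x - ⟪A (z - x), d⟫ + 1 / (2 * α) * ‖d‖ ^ 2)
    (fun z => ?_) (fun z => ?_) hT (by linarith)
  · linarith [inner_map_sub_le_bregmanDist_add hα hμ hsc (hψ x) z d]
  · have hsmooth :=
      mul_le_mul_of_nonneg_left (bregmanDist_le_mul_norm_sub_sq hconv hψ hlip z xp) hμ.le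
    have hsplit : ⟪A (z - x), d⟫ = ⟪A (xp - x), d⟫ + ⟪A (z - xp), d⟫ := by
      rw [← inner_add_left, ← map_add, add_comm, sub_add_sub_cancel]
    rw [inner_sub_left, real_inner_smul_left, inner_sub_eq_bregmanDist (φ := ψ),
      ContinuousLinearMap.adjoint_inner_left, real_inner_comm (A (z - xp)), hsplit]
    linarith

/-- One iteration of SPIDA from `u` to `v`, with dual predictor `yt`. The two dual maximization
steps are written as minimizations of the negated objective. -/
structure IsSPIDAStep (X : Set E) (Y : Set F) (f : E → ℝ) (g : F → ℝ) (A : E →L[ℝ] F)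
    (γ μ : ℝ) (φ : F → ℝ) (φ' : F → F) (ψ : E → ℝ) (ψ' : E → E)
    (u : E × F) (yt : F) (v : E × F) : Prop where
  predictor : IsBregmanProx Y g (-A u.1) γ φ φ' u.2 yt
  primal : IsBregmanProx X f (adjoint A yt) μ ψ ψ' u.1 v.1
  dual : IsBregmanProx Y g (-A v.1) γ φ φ' u.2 v.2

namespace IsSPIDAStep

theorem bregmanSum_add_spidaDecrement_le (hstep : IsSPIDAStep X Y f g A γ μ φ φ' ψ ψ' u yt v)
    (hf : ConvexOn ℝ X f) (hg : ConvexOn ℝ Y g) (hφ : ∀ z, HasGradientAt φ (φ' z) z)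
    (hψ : ∀ z, HasGradientAt ψ (ψ' z) z) {p : E × F} (hpX : p.1 ∈ X) (hpY : p.2 ∈ Y)
    (hp : IsSaddlePointOn X Y (lagrangian f g A) p.1 p.2) :
    bregmanSum γ μ φ φ' ψ ψ' p v + spidaDecrement γ μ φ φ' ψ ψ' A u yt v ≤
      bregmanSum γ μ φ φ' ψ ψ' p u := by
  have hpredictor := hstep.predictor.add_bregmanDist_le hg (hφ yt) hstep.dual.1
  have hprimal := hstep.primal.add_bregmanDist_le hf (hψ v.1) hpX
  have hdual := hstep.dual.add_bregmanDist_le hg (hφ v.2) hpY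
  have hsaddle := hp v.1 hstep.primal.1 yt hstep.predictor.1
  simp only [lagrangian] at hsaddle
  simp only [ContinuousLinearMap.adjoint_inner_left, inner_neg_left] at hpredictor hprimal hdual
  rw [real_inner_comm (A v.1), real_inner_comm (A p.1)] at hprimal
  simp only [bregmanSum, spidaDecrement, map_sub, inner_sub_left, inner_sub_right]
  linarith

theorem exists_naturalResidual_le (hstep : IsSPIDAStep X Y f g A γ μ φ φ' ψ ψ' u yt v)
    (hX : Convex ℝ X) (hY : Convex ℝ Y) (hf : ConvexOn ℝ univ f) (hfcont : Continuous f)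
    (hg : ConvexOn ℝ univ g) (hgcont : Continuous g) (hφ : ∀ z, HasGradientAt φ (φ' z) z)
    (hψ : ∀ z, HasGradientAt ψ (ψ' z) z) {PX : E → E} {PY : F → F}
    (hPX : IsMetricProjection X PX) (hPY : IsMetricProjection Y PY) :
    ∃ ξ ∈ subdifferential f v.1, ∃ ζ ∈ subdifferential g v.2,
      naturalResidual PX v.1 (ξ + adjoint A v.2) ≤
        ‖μ • (ψ' v.1 - ψ' u.1) - adjoint A (v.2 - yt)‖ ∧
      naturalResidual PY v.2 (ζ - A v.1) ≤ ‖γ • (φ' v.2 - φ' u.2)‖ := by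
  obtain ⟨ξ, hξ, hξ_vi⟩ := hstep.primal.exists_mem_subdifferential hf hfcont hX (hψ v.1)
  obtain ⟨ζ, hζ, hζ_vi⟩ := hstep.dual.exists_mem_subdifferential hg hgcont hY (hφ v.2)
  refine ⟨ξ, hξ, ζ, hζ, (naturalResidual_le_norm_sub hPX hX hstep.primal.1 hξ_vi).trans_eq ?_,
    (naturalResidual_le_norm_sub hPY hY hstep.dual.1 hζ_vi).trans_eq ?_⟩
  · rw [norm_sub_rev, map_sub]
    congr 1
    abel
  · rw [norm_sub_rev]
    congr 1
    abel

end IsSPIDAStep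

theorem mul_sq_norm_residuals_le_spidaDecrement (hα : 0 < α) (hγ : 0 ≤ γ) (hμ : 0 < μ)
    (hφ : ∀ z, HasGradientAt φ (φ' z) z) (hφsc : StrongConvexOn univ ϱ φ)
    (hφlip : LipschitzWith Lφ φ') (hψ : ∀ z, HasGradientAt ψ (ψ' z) z)
    (hψsc : StrongConvexOn univ (α * ‖A‖ ^ 2 / μ) ψ) (hψlip : LipschitzWith Lψ ψ') (hT : 0 ≤ T)
    (hTφ : 4 * α * γ ^ 2 * Lφ ^ 2 * T ≤ γ * α * ϱ - 1) (hTψ : 4 * μ * Lψ * T ≤ 1)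
    (u : E × F) (yt : F) (v : E × F) :
    T * (‖μ • (ψ' v.1 - ψ' u.1) - adjoint A (v.2 - yt)‖ ^ 2 + ‖γ • (φ' v.2 - φ' u.2)‖ ^ 2) ≤
      spidaDecrement γ μ φ φ' ψ ψ' A u yt v := by
  have hprimal := mul_sq_norm_primal_residual_le hα hμ hψ hψsc hψlip hT hTψ u.1 v.1 (v.2 - yt)
  have hdual := mul_sq_norm_dual_residual_le hα hT hφlip hTφ u.2 yt v.2
  have hcorrector :=
    mul_le_mul_of_nonneg_left (mul_norm_sub_sq_le_bregmanDist hφsc (hφ yt) v.2) hγ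
  have hpredictor :=
    mul_le_mul_of_nonneg_left (mul_norm_sub_sq_le_bregmanDist hφsc (hφ u.2) yt) hγ
  have hYoung : 0 ≤ 1 / (2 * α) * ‖yt - u.2‖ ^ 2 := by positivity
  unfold spidaDecrement
  linarith

theorem spida_linear_convergence_general (hX : Convex ℝ X) (hY : Convex ℝ Y)
    {PX : E → E} {PY : F → F} (hPX : IsMetricProjection X PX) (hPY : IsMetricProjection Y PY)
    (hf : ConvexOn ℝ univ f) (hflsc : LowerSemicontinuous f)
    (hg : ConvexOn ℝ univ g) (hglsc : LowerSemicontinuous g)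
    (hα : 0 < α) (hγ : 0 < γ) (hμ : 0 < μ)
    (hφ : ∀ z, HasGradientAt φ (φ' z) z) (hφsc : StrongConvexOn univ ϱ φ)
    (hφlip : LipschitzWith Lφ φ') (hψ : ∀ z, HasGradientAt ψ (ψ' z) z)
    (hψsc : StrongConvexOn univ (α * ‖A‖ ^ 2 / μ) ψ) (hψlip : LipschitzWith Lψ ψ')
    {u : ℕ → E × F} {yt : ℕ → F}
    (hstep : ∀ k, IsSPIDAStep X Y f g A γ μ φ φ' ψ ψ' (u k) (yt (k + 1)) (u (k + 1)))
    {U : Set (E × F)} (hUne : U.Nonempty)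
    (hU : ∀ p ∈ U, p.1 ∈ X ∧ p.2 ∈ Y ∧ IsSaddlePointOn X Y (lagrangian f g A) p.1 p.2)
    {η ϑ : ℝ}
    (herr : ∀ k, ∀ ξ ∈ subdifferential f (u (k + 1)).1, ∀ ζ ∈ subdifferential g (u (k + 1)).2,
      bregmanSqDist γ μ φ φ' ψ ψ' U (u (k + 1)) ≤ η ^ 2 *
        (naturalResidual PX (u (k + 1)).1 (ξ + adjoint A (u (k + 1)).2) ^ 2 +
          naturalResidual PY (u (k + 1)).2 (ζ - A (u (k + 1)).1) ^ 2))
    (hϑ : 0 ≤ ϑ) (hϑφ : 4 * α * γ ^ 2 * Lφ ^ 2 * (ϑ * η ^ 2) ≤ γ * α * ϱ - 1)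
    (hϑψ : 4 * μ * Lψ * (ϑ * η ^ 2) ≤ 1) (k : ℕ) :
    (1 + ϑ) * bregmanSqDist γ μ φ φ' ψ ψ' U (u (k + 1)) ≤ bregmanSqDist γ μ φ φ' ψ ψ' U (u k) := by
  have hϱ : 0 < ϱ := by
    have hpos : 0 < γ * α * ϱ :=
      one_pos.trans_le (sub_nonneg.1 (le_trans (by positivity) hϑφ))
    exact (mul_pos_iff_of_pos_left (mul_pos hγ hα)).1 hpos
  obtain ⟨ξ, hξ, ζ, hζ, hξ_res, hζ_res⟩ := (hstep k).exists_naturalResidual_le hX hY hf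
    (continuous_of_convexOn_of_lowerSemicontinuous hf hflsc) hg
    (continuous_of_convexOn_of_lowerSemicontinuous hg hglsc) hφ hψ hPX hPY
  have hdecrement : ϑ * bregmanSqDist γ μ φ φ' ψ ψ' U (u (k + 1)) ≤
      spidaDecrement γ μ φ φ' ψ ψ' A (u k) (yt (k + 1)) (u (k + 1)) := by
    refine le_trans ?_ (mul_sq_norm_residuals_le_spidaDecrement hα hγ.le hμ hφ hφsc hφlip hψ
      hψsc hψlip (by positivity) hϑφ hϑψ (u k) (yt (k + 1)) (u (k + 1)))
    rw [mul_assoc]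
    gcongr
    refine (herr k ξ hξ ζ hζ).trans ?_
    gcongr <;> exact norm_nonneg _
  have : Nonempty U := hUne.to_subtype
  refine le_ciInf fun p => ?_
  obtain ⟨hpX, hpY, hp⟩ := hU p p.2
  have hdescent := (hstep k).bregmanSum_add_spidaDecrement_le (hf.subset (subset_univ X) hX)
    (hg.subset (subset_univ Y) hY) hφ hψ hpX hpY hp
  have hdist : bregmanSqDist γ μ φ φ' ψ ψ' U (u (k + 1)) ≤
      bregmanSum γ μ φ φ' ψ ψ' p (u (k + 1)) :=
    bregmanSqDist_le_bregmanSum (bregmanSum_nonneg hγ.le hμ.le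
      (strongConvexOn_zero.1 (hφsc.mono hϱ.le)) (hφ _)
      (strongConvexOn_zero.1 (hψsc.mono (by positivity))) (hψ _)) p.2
  linarith

end SPIDA

section Parameters

variable {E F : Type*} [NormedAddCommGroup E] [InnerProductSpace ℝ E]
  [NormedAddCommGroup F] [InnerProductSpace ℝ F] {A : E →L[ℝ] F} {γ μ α ϱ η ϑ L L₀ m N c : ℝ}

theorem nontrivial_of_continuousLinearMap_ne_zero (hA : A ≠ 0) : Nontrivial E := by
  obtain ⟨z, hz⟩ := A.exists_ne_zero hA
  exact nontrivial_of_ne z 0 fun h => hz (by rw [h, map_zero])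

variable [CompleteSpace E] [CompleteSpace F]

-- For `A = 0` the bound on `L₀` reads `L₀ ≤ 0`, because `ϱ * μ / 0 = 0`.
theorem ne_zero_of_pos_of_le_div_norm_adjoint_comp_self (hL₀ : 0 < L₀)
    (hL₀_le : L₀ ≤ ϱ * μ / (α * ‖(adjoint A).comp A‖)) : A ≠ 0 := by
  rintro rfl
  simp only [ContinuousLinearMap.comp_zero, norm_zero, mul_zero, div_zero] at hL₀_le
  exact hL₀.not_ge hL₀_le

theorem mul_norm_sq_div_le_div (hα : 0 < α) (hμ : 0 < μ) (hL₀ : 0 < L₀)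
    (hL₀_le : L₀ ≤ ϱ * μ / (α * ‖(adjoint A).comp A‖)) : α * ‖A‖ ^ 2 / μ ≤ ϱ / L₀ := by
  have hA : 0 < ‖A‖ := norm_pos_iff.2 (ne_zero_of_pos_of_le_div_norm_adjoint_comp_self hL₀ hL₀_le)
  rw [ContinuousLinearMap.norm_adjoint_comp_self, le_div_iff₀ (by positivity)] at hL₀_le
  rw [div_le_div_iff₀ hμ hL₀]
  linarith

theorem dual_rate_le_of_le_div (hα : 0 < α) (hη : 0 < η) (hγ : 0 < γ) (hL : 0 < L) (hN : 0 ≤ N)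
    (hϑ : 0 ≤ ϑ) (hϑ_le : ϑ ≤ c / (4 * α * η ^ 2 * (N + γ ^ 2 * L ^ 2))) :
    4 * α * γ ^ 2 * L ^ 2 * (ϑ * η ^ 2) ≤ c :=
  calc 4 * α * γ ^ 2 * L ^ 2 * (ϑ * η ^ 2) = ϑ * (4 * α * η ^ 2 * (γ ^ 2 * L ^ 2)) := by ring
    _ ≤ ϑ * (4 * α * η ^ 2 * (N + γ ^ 2 * L ^ 2)) := by
        gcongr
        exact le_add_of_nonneg_left hN
    _ ≤ c := (le_div_iff₀ (by positivity)).1 hϑ_le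

theorem primal_rate_le_one_of_le_div (hμ : 0 < μ) (hη : 0 < η) (hL : 0 < L) (hm : m ≤ L)
    (hϑ_le : ϑ ≤ m / (4 * μ * η ^ 2 * L ^ 2)) : 4 * μ * L * (ϑ * η ^ 2) ≤ 1 := by
  refine le_of_mul_le_mul_right ?_ hL
  calc 4 * μ * L * (ϑ * η ^ 2) * L = ϑ * (4 * μ * η ^ 2 * L ^ 2) := by ring
    _ ≤ m := (le_div_iff₀ (by positivity)).1 hϑ_le
    _ ≤ 1 * L := by rwa [one_mul]

end Parameters

/-- Q-linear convergence of SPIDA under a Bregman error bound. -/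
theorem spida_linear_convergence {n m : ℕ}
    (X : Set (Euc n)) (Y : Set (Euc m))
    (hXne : X.Nonempty) (hXcl : IsClosed X) (hXcv : Convex ℝ X)
    (hYne : Y.Nonempty) (hYcl : IsClosed Y) (hYcv : Convex ℝ Y)
    (f : Euc n → ℝ) (g : Euc m → ℝ)
    (hf : ConvexOn ℝ Set.univ f) (hflsc : LowerSemicontinuous f)
    (hg : ConvexOn ℝ Set.univ g) (hglsc : LowerSemicontinuous g)
    (A : Euc n →L[ℝ] Euc m)
    (γ μ : ℝ) (hγ : 0 < γ) (hμ : 0 < μ)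
    (φ : Euc m → ℝ) (φ' : Euc m → Euc m)
    (hφg : ∀ z, HasGradientAt φ (φ' z) z) (hφcv : ConvexOn ℝ Set.univ φ)
    (ψ : Euc n → ℝ) (ψ' : Euc n → Euc n)
    (hψg : ∀ z, HasGradientAt ψ (ψ' z) z) (hψcv : ConvexOn ℝ Set.univ ψ)
    (x : ℕ → Euc n) (yt y : ℕ → Euc m)
    (hx0 : x 0 ∈ X) (hy0 : y 0 ∈ Y)
    (hytmem : ∀ k, yt (k + 1) ∈ Y)
    (hytmax : ∀ k, ∀ z ∈ Y, -g z + ⟪A (x k), z⟫ - γ * Breg φ φ' z (y k) ≤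
      -g (yt (k + 1)) + ⟪A (x k), yt (k + 1)⟫ - γ * Breg φ φ' (yt (k + 1)) (y k))
    (hxmem : ∀ k, x (k + 1) ∈ X)
    (hxmin : ∀ k, ∀ z ∈ X,
      f (x (k + 1)) + ⟪A (x (k + 1)), yt (k + 1)⟫ + μ * Breg ψ ψ' (x (k + 1)) (x k) ≤
        f z + ⟪A z, yt (k + 1)⟫ + μ * Breg ψ ψ' z (x k))
    (hymem : ∀ k, y (k + 1) ∈ Y)
    (hymax : ∀ k, ∀ z ∈ Y, -g z + ⟪A (x (k + 1)), z⟫ - γ * Breg φ φ' z (y k) ≤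
      -g (y (k + 1)) + ⟪A (x (k + 1)), y (k + 1)⟫ - γ * Breg φ φ' (y (k + 1)) (y k))
    (ϱ α : ℝ) (hϱ : 0 < ϱ) (hα : 0 < α)
    (hφsc : ConvexOn ℝ Set.univ (fun z => φ z - ϱ / 2 * ‖z‖ ^ 2))
    (hαϱγ : 1 ≤ α * ϱ * γ)
    (φn : Euc n → ℝ) (φn' : Euc n → Euc n)
    (hφng : ∀ z, HasGradientAt φn (φn' z) z)
    (hφnsc : ConvexOn ℝ Set.univ (fun z => φn z - ϱ / 2 * ‖z‖ ^ 2))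
    (L0 : ℝ) (hL0pos : 0 < L0)
    (hL0le : L0 ≤ ϱ * μ / (α * ‖(ContinuousLinearMap.adjoint A).comp A‖))
    (hLψφ : ConvexOn ℝ Set.univ (fun z => L0 * ψ z - φn z))
    (hstrict : 1 < α * ϱ * γ)
    (ς : ℝ) (hς : 0 < ς)
    (hψsc : ConvexOn ℝ Set.univ (fun z => ψ z - ς / 2 * ‖z‖ ^ 2))
    (Lψ Lφ : NNReal) (hLψpos : 0 < (Lψ : ℝ)) (hLφpos : 0 < (Lφ : ℝ))
    (hψlip : LipschitzWith Lψ ψ') (hφlip : LipschitzWith Lφ φ')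
    (Ustar : Set (Euc n × Euc m))
    (hUstar : Ustar = {p : Euc n × Euc m | p.1 ∈ X ∧ p.2 ∈ Y ∧
      ∀ xx ∈ X, ∀ yy ∈ Y,
        Lag f g A p.1 yy ≤ Lag f g A p.1 p.2 ∧ Lag f g A p.1 p.2 ≤ Lag f g A xx p.2})
    (hUne : Ustar.Nonempty)
    (dB : Euc n × Euc m → ℝ)
    (hdB : ∀ u : Euc n × Euc m,
      dB u = ⨅ p : Ustar, (γ * Breg φ φ' (p : Euc n × Euc m).2 u.2
        + μ * Breg ψ ψ' (p : Euc n × Euc m).1 u.1))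
    (η : ℝ) (hη : 0 < η)
    (herr : ∀ k : ℕ, ∀ ξ ∈ subdiff f (x (k + 1)), ∀ ζ ∈ subdiff g (y (k + 1)),
      dB (x (k + 1), y (k + 1)) ≤ η ^ 2 *
        (‖x (k + 1) - projOn X (x (k + 1)
            - (ξ + ContinuousLinearMap.adjoint A (y (k + 1))))‖ ^ 2
          + ‖y (k + 1) - projOn Y (y (k + 1) - (ζ - A (x (k + 1))))‖ ^ 2))
    (ϑ : ℝ)
    (hϑ : ϑ = min (min (ϱ / (4 * γ * η ^ 2 * (Lφ : ℝ) ^ 2))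
        ((γ * α * ϱ - 1) / (4 * α * η ^ 2 *
          (‖A.comp (ContinuousLinearMap.adjoint A)‖ + γ ^ 2 * (Lφ : ℝ) ^ 2))))
      (ς / (4 * μ * η ^ 2 * (Lψ : ℝ) ^ 2))) :
    0 < ϑ ∧ ∀ k : ℕ, (1 + ϑ) * dB (x (k + 1), y (k + 1)) ≤ dB (x k, y k) := by
  have : Nontrivial (Euc n) := nontrivial_of_continuousLinearMap_ne_zero
    (ne_zero_of_pos_of_le_div_norm_adjoint_comp_self hL0pos hL0le)
  have hςLψ : ς ≤ Lψ :=
    le_of_strongConvexOn_of_lipschitzWith (strongConvexOn_iff_convex.2 hψsc) hψg hψlip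
  have hψsc_A : StrongConvexOn univ (α * ‖A‖ ^ 2 / μ) ψ :=
    (strongConvexOn_of_convexOn_mul_sub hL0pos (strongConvexOn_iff_convex.2 hφnsc) hLψφ).mono
      (mul_norm_sq_div_le_div hα hμ hL0pos hL0le)
  have hpos : 0 < γ * α * ϱ - 1 := by linarith
  have hϑpos : 0 < ϑ := by rw [hϑ]; positivity
  obtain ⟨⟨-, hϑφ⟩, hϑψ⟩ := by simpa only [le_min_iff] using hϑ.le
  have hstep (k : ℕ) :
      IsSPIDAStep X Y f g A γ μ φ φ' ψ ψ' (x k, y k) (yt (k + 1)) (x (k + 1), y (k + 1)) :=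
    ⟨.of_isMaxOn (hytmem k) (hytmax k), .of_isMinOn_inner_map (hxmem k) (hxmin k),
      .of_isMaxOn (hymem k) (hymax k)⟩
  have hsaddle : ∀ p ∈ Ustar, p.1 ∈ X ∧ p.2 ∈ Y ∧ IsSaddlePointOn X Y (lagrangian f g A) p.1 p.2 :=
    hUstar ▸ fun p ⟨hpX, hpY, hp⟩ =>
      ⟨hpX, hpY, fun a ha b hb => (hp a ha b hb).1.trans (hp a ha b hb).2⟩
  obtain rfl : dB = bregmanSqDist γ μ φ φ' ψ ψ' Ustar := funext hdB
  exact ⟨hϑpos, spida_linear_convergence_general hXcv hYcv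
    (isMetricProjection_projOn hXne hXcl hXcv) (isMetricProjection_projOn hYne hYcl hYcv)
    hf hflsc hg hglsc hα hγ hμ hφg (strongConvexOn_iff_convex.2 hφsc) hφlip hψg hψsc_A hψlip
    (u := fun k => (x k, y k)) hstep hUne hsaddle herr hϑpos.le
    (dual_rate_le_of_le_div hα hη hγ hLφpos (norm_nonneg _) hϑpos.le hϑφ)
    (primal_rate_le_one_of_le_div hμ hη hLψpos hςLψ hϑψ)⟩
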